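/- Let r ≥ 1, let C = {u ∈ ℝ^{r+1} : u₀ ≥ √(u₁² + ⋯ + u_r²)} be the forward light cone, and let α(u) = √(u₀² − u₁² − ⋯ − u_r²) for u ∈ C and α(u) = −∞ otherwise; identify (ℝ^{r+1})* with ℝ^{r+1} via the standard pairing ⟨h, u⟩ = Σᵢ hᵢuᵢ. Then the negative dual cone is C^∨ = {h ∈ ℝ^{r+1} : h₀ ≤ 0 and h₀² ≥ h₁² + ⋯ + h_r²}, and the dual function satisfies α^∨(h) = √(h₀² − h₁² − ⋯ − h_r²) for every h ∈ C^∨. -/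

import Mathlib

open Set

variable {V : Type*} [NormedAddCommGroup V] [NormedSpace ℝ V]

/-- `C` is a closed convex cone (containing the origin). -/
def IsClosedConvexCone (C : Set V) : Prop :=
  (0 : V) ∈ C ∧ IsClosed C ∧ Convex ℝ C ∧ ∀ c : ℝ, 0 < c → ∀ x ∈ C, c • x ∈ C

/-- A cone is salient if it contains no nonzero linear subspace,
equivalently it contains no pair `x, -x` with `x ≠ 0`. -/
def IsSalientCone (C : Set V) : Prop := ∀ x ∈ C, x ≠ 0 → -x ∉ C

/-- The relative boundary of a set: the set minus its relative (intrinsic) interior. -/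
def relBoundary (C : Set V) : Set V := C \ intrinsicInterior ℝ C

/-- `a` is an antinorm associated with the cone `C` : it takes values in `ℝ ∪ {-∞}`,
is positive on the relative interior of `C`, vanishes on the relative boundary of `C`,
is `-∞` off `C`, is positively homogeneous and superadditive (concave). -/
def IsAntinorm (C : Set V) (a : V → EReal) : Prop :=
  (∀ v, a v ≠ ⊤) ∧
  (∀ v ∈ intrinsicInterior ℝ C, 0 < a v) ∧
  (∀ v ∈ relBoundary C, a v = 0) ∧
  (∀ v, v ∉ C → a v = ⊥) ∧
  (∀ c : ℝ, 0 < c → ∀ v, a (c • v) = (c : EReal) * a v) ∧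
  (∀ v w, a v + a w ≤ a (v + w))

/-- The negative dual cone `C^∨ = {p : ⟨p,u⟩ ≤ 0 ∀ u ∈ C}`. -/
def negDual (C : Set V) : Set (V →L[ℝ] ℝ) := {p | ∀ u ∈ C, p u ≤ 0}

/-- The antisphere of radius `r`. -/
def antisphere (a : V → EReal) (r : ℝ) : Set V := {v | a v = (r : EReal)}

/-- The dual function `α^∨(p) = -sup_{v ∈ S₁} ⟨p, v⟩`. -/
noncomputable def dualFn (a : V → EReal) (p : V →L[ℝ] ℝ) : EReal :=
  - sSup ((fun v => ((p v : ℝ) : EReal)) '' antisphere a 1)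

/-- `p^∨_r` : the set of maximizers of `v ↦ ⟨p, v⟩` over the antisphere `S_r`. -/
def maxSet (a : V → EReal) (p : V →L[ℝ] ℝ) (r : ℝ) : Set V :=
  {v ∈ antisphere a r | ∀ w ∈ antisphere a r, p w ≤ p v}

/-- `p^∨ = ⋃_{r ≥ 0} p^∨_r`. -/
def pDual (a : V → EReal) (p : V →L[ℝ] ℝ) : Set V := ⋃ r ∈ Ici (0 : ℝ), maxSet a p r

/-- The forward light cone `{u : u₀ ≥ √(u₁² + ⋯ + u_r²)}` in `ℝ^{r+1}`. -/
noncomputable def lightCone (r : ℕ) : Set (EuclideanSpace ℝ (Fin (r + 1))) :=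
  {u | Real.sqrt (∑ i ∈ Finset.univ.filter (fun i => i ≠ 0), (u i) ^ 2) ≤ u 0}

/-- The Lorentzian antinorm `α(u) = √(u₀² - u₁² - ⋯ - u_r²)` on the forward light cone,
extended by `-∞` off the cone. -/
noncomputable def lightAntinorm (r : ℕ) (u : EuclideanSpace ℝ (Fin (r + 1))) : EReal :=
  if Real.sqrt (∑ i ∈ Finset.univ.filter (fun i => i ≠ 0), (u i) ^ 2) ≤ u 0 then
    ((Real.sqrt ((u 0) ^ 2 - ∑ i ∈ Finset.univ.filter (fun i => i ≠ 0), (u i) ^ 2) : ℝ) : EReal)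
  else ⊥

/-!
Split each vector into its component along the unit vector `e` and its spatial part orthogonal
to `e`. For two vectors of the future cone, the Cauchy–Schwarz inequality for the spatial parts
followed by Aczél's inequality `√(a² - x²) √(b² - y²) ≤ ab - xy` gives the reverse Cauchy–Schwarz
inequality `√q(u) √q(v) ≤ ⟪u, v⟫`. Hence pairings within the cone are nonnegative, and `⟪k, ·⟫` is
at least `√q(k)` on the unit hyperboloid. Both bounds are sharp, as one sees by testing `k` against
vectors whose spatial part is a multiple of that of `-k`: a lightlike one for the dual cone, and a
point of the unit hyperboloid for the dual function. On the light cone, `q(k) = 0`, the latter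
infimum need not be attained, so it is approached through the values `s > √q(k)`.
-/

theorem sqrt_sq_sub_sq_mul_sqrt_sq_sub_sq_le {a b x y : ℝ} (hx : |x| ≤ a) (hy : |y| ≤ b) :
    √(a ^ 2 - x ^ 2) * √(b ^ 2 - y ^ 2) ≤ a * b - x * y := by
  have hxy : x * y ≤ a * b :=
    (le_abs_self _).trans (abs_mul x y ▸ mul_le_mul hx hy (abs_nonneg y) ((abs_nonneg x).trans hx))
  have hx_sq : 0 ≤ a ^ 2 - x ^ 2 := sub_nonneg.2 (sq_le_sq.2 (hx.trans (le_abs_self a)))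
  rw [← Real.sqrt_mul hx_sq]
  refine Real.sqrt_le_iff.2 ⟨sub_nonneg.2 hxy, ?_⟩
  calc (a ^ 2 - x ^ 2) * (b ^ 2 - y ^ 2) = (a * b - x * y) ^ 2 - (a * y - b * x) ^ 2 := by ring
    _ ≤ (a * b - x * y) ^ 2 := sub_le_self _ (sq_nonneg _)

section Lorentz

open scoped RealInnerProductSpace

variable {E : Type*} [NormedAddCommGroup E] [InnerProductSpace ℝ E] {e : E}

/-- The spatial part of `u` relative to the time direction `e`, i.e. its component orthogonal to
`e` when `e` is a unit vector. -/
def spatialPart (e u : E) : E := u - ⟪e, u⟫ • e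

/-- The Lorentzian quadratic form with time direction `e` on a Euclidean space, where `e` is meant
to be a unit vector. -/
def lorentzForm (e u : E) : ℝ := ⟪e, u⟫ ^ 2 - ‖spatialPart e u‖ ^ 2

/-- The forward light cone with time direction `e`. -/
def futureCone (e : E) : Set E := {u | ‖spatialPart e u‖ ≤ ⟪e, u⟫}

open Classical in
/-- The Lorentzian antinorm: the square root of the Lorentzian form on the forward light cone,
extended by `-∞`. -/
noncomputable def lorentzAntinorm (e u : E) : EReal :=
  if u ∈ futureCone e then ((√(lorentzForm e u) : ℝ) : EReal) else ⊥

theorem spatialPart_neg (e u : E) : spatialPart e (-u) = -spatialPart e u := by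
  simp only [spatialPart, inner_neg_right, neg_smul, neg_sub, sub_neg_eq_add, neg_add_eq_sub]

theorem lorentzForm_neg (e u : E) : lorentzForm e (-u) = lorentzForm e u := by
  simp only [lorentzForm, spatialPart_neg, inner_neg_right, norm_neg, neg_sq]

theorem neg_mem_futureCone_iff {h : E} :
    -h ∈ futureCone e ↔ ⟪e, h⟫ ≤ 0 ∧ ‖spatialPart e h‖ ^ 2 ≤ ⟪e, h⟫ ^ 2 := by
  rw [futureCone, mem_ofPred_eq, spatialPart_neg, norm_neg, inner_neg_right]
  constructor
  · intro hle
    have hnonpos : ⟪e, h⟫ ≤ 0 := neg_nonneg.1 ((norm_nonneg _).trans hle)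
    exact ⟨hnonpos, neg_sq ⟪e, h⟫ ▸ pow_le_pow_left₀ (norm_nonneg _) hle 2⟩
  · rintro ⟨hnonpos, hsq⟩
    exact le_of_sq_le_sq (by rwa [neg_sq]) (neg_nonneg.2 hnonpos)

theorem mem_antisphere_lorentzAntinorm_one_iff {v : E} :
    v ∈ antisphere (lorentzAntinorm e) 1 ↔ v ∈ futureCone e ∧ lorentzForm e v = 1 := by
  rw [antisphere, mem_ofPred_eq, lorentzAntinorm]
  split_ifs with hv
  · rw [EReal.coe_eq_coe_iff, Real.sqrt_eq_one, and_iff_right hv]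
  · exact iff_of_false (EReal.coe_ne_bot 1).symm fun h => hv h.1

theorem inner_spatialPart_right (he : ‖e‖ = 1) (u : E) : ⟪e, spatialPart e u⟫ = 0 := by
  rw [spatialPart, inner_sub_right, real_inner_smul_right, real_inner_self_eq_norm_sq, he]
  ring

theorem inner_eq_mul_add_inner_spatialPart (he : ‖e‖ = 1) (u v : E) :
    ⟪u, v⟫ = ⟪e, u⟫ * ⟪e, v⟫ + ⟪spatialPart e u, spatialPart e v⟫ := by
  have horth : ⟪⟪e, u⟫ • e, spatialPart e v⟫ = 0 := by
    rw [real_inner_smul_left, inner_spatialPart_right he, mul_zero]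
  rw [spatialPart, inner_sub_left, horth, spatialPart, inner_sub_right, real_inner_smul_right,
    real_inner_comm e u]
  ring

theorem inner_smul_add_smul_spatialPart (he : ‖e‖ = 1) (a b : ℝ) (u : E) :
    ⟪e, a • e + b • spatialPart e u⟫ = a := by
  rw [inner_add_right, real_inner_smul_right, real_inner_smul_right, inner_spatialPart_right he,
    real_inner_self_eq_norm_sq, he]
  ring

theorem spatialPart_smul_add_smul_spatialPart (he : ‖e‖ = 1) (a b : ℝ) (u : E) :
    spatialPart e (a • e + b • spatialPart e u) = b • spatialPart e u := by
  rw [spatialPart, inner_smul_add_smul_spatialPart he, add_sub_cancel_left]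

theorem inner_self_smul_add_smul_spatialPart (he : ‖e‖ = 1) (a b : ℝ) (u : E) :
    ⟪u, a • e + b • spatialPart e u⟫ = ⟪e, u⟫ * a + b * ‖spatialPart e u‖ ^ 2 := by
  rw [inner_eq_mul_add_inner_spatialPart he, inner_smul_add_smul_spatialPart he,
    spatialPart_smul_add_smul_spatialPart he, real_inner_smul_right, real_inner_self_eq_norm_sq]

theorem smul_add_smul_spatialPart_mem_futureCone_iff (he : ‖e‖ = 1) {a b : ℝ} {u : E} :
    a • e + b • spatialPart e u ∈ futureCone e ↔ |b| * ‖spatialPart e u‖ ≤ a := by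
  rw [futureCone, mem_ofPred_eq, inner_smul_add_smul_spatialPart he,
    spatialPart_smul_add_smul_spatialPart he, norm_smul, Real.norm_eq_abs]

theorem lorentzForm_smul_add_smul_spatialPart (he : ‖e‖ = 1) (a b : ℝ) (u : E) :
    lorentzForm e (a • e + b • spatialPart e u) = a ^ 2 - b ^ 2 * ‖spatialPart e u‖ ^ 2 := by
  rw [lorentzForm, inner_smul_add_smul_spatialPart he, spatialPart_smul_add_smul_spatialPart he,
    norm_smul, mul_pow, Real.norm_eq_abs, sq_abs]

theorem sqrt_lorentzForm_mul_sqrt_lorentzForm_le_inner (he : ‖e‖ = 1) {u v : E}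
    (hu : u ∈ futureCone e) (hv : v ∈ futureCone e) :
    √(lorentzForm e u) * √(lorentzForm e v) ≤ ⟪u, v⟫ := by
  have hcauchy := neg_le_of_abs_le (abs_real_inner_le_norm (spatialPart e u) (spatialPart e v))
  calc √(lorentzForm e u) * √(lorentzForm e v)
      ≤ ⟪e, u⟫ * ⟪e, v⟫ - ‖spatialPart e u‖ * ‖spatialPart e v‖ :=
        sqrt_sq_sub_sq_mul_sqrt_sq_sub_sq_le (by rwa [abs_norm]) (by rwa [abs_norm])
    _ ≤ ⟪e, u⟫ * ⟪e, v⟫ + ⟪spatialPart e u, spatialPart e v⟫ := by linarith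
    _ = ⟪u, v⟫ := (inner_eq_mul_add_inner_spatialPart he u v).symm

theorem mem_futureCone_iff_forall_inner_nonneg (he : ‖e‖ = 1) {k : E} :
    k ∈ futureCone e ↔ ∀ u ∈ futureCone e, 0 ≤ ⟪k, u⟫ := by
  constructor
  · intro hk u hu
    exact (mul_nonneg (Real.sqrt_nonneg _) (Real.sqrt_nonneg _)).trans
      (sqrt_lorentzForm_mul_sqrt_lorentzForm_le_inner he hk hu)
  · intro hk
    have htest {a b : ℝ} (hab : |b| * ‖spatialPart e k‖ ≤ a) :
        0 ≤ ⟪e, k⟫ * a + b * ‖spatialPart e k‖ ^ 2 :=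
      inner_self_smul_add_smul_spatialPart he a b k ▸
        hk _ ((smul_add_smul_spatialPart_mem_futureCone_iff he).2 hab)
    have htime : 0 ≤ ⟪e, k⟫ := by simpa using htest (a := 1) (b := 0) (by simp)
    have hlight : 0 ≤ ⟪e, k⟫ * ‖spatialPart e k‖ + -1 * ‖spatialPart e k‖ ^ 2 :=
      htest (by simp)
    change ‖spatialPart e k‖ ≤ ⟪e, k⟫
    rcases (norm_nonneg (spatialPart e k)).eq_or_lt with hzero | hpos
    · rwa [← hzero]
    · exact le_of_mul_le_mul_right (by linarith) hpos

theorem innerSL_mem_negDual_futureCone_iff (he : ‖e‖ = 1) {h : E} :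
    innerSL ℝ h ∈ negDual (futureCone e) ↔ -h ∈ futureCone e := by
  rw [mem_futureCone_iff_forall_inner_nonneg he]
  simp only [negDual, mem_ofPred_eq, innerSL_apply_apply, inner_neg_left, neg_nonneg]

theorem sqrt_lorentzForm_le_inner_of_mem_antisphere (he : ‖e‖ = 1) {k v : E}
    (hk : k ∈ futureCone e) (hv : v ∈ antisphere (lorentzAntinorm e) 1) :
    √(lorentzForm e k) ≤ ⟪k, v⟫ := by
  obtain ⟨hvcone, hvform⟩ := mem_antisphere_lorentzAntinorm_one_iff.1 hv
  simpa only [hvform, Real.sqrt_one, mul_one] using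
    sqrt_lorentzForm_mul_sqrt_lorentzForm_le_inner he hk hvcone

theorem exists_mem_antisphere_inner_le (he : ‖e‖ = 1) {k : E} {s : ℝ}
    (hs : √(lorentzForm e k) < s) :
    ∃ v ∈ antisphere (lorentzAntinorm e) 1, ⟪k, v⟫ ≤ s := by
  have hspos : 0 < s := (Real.sqrt_nonneg _).trans_lt hs
  set n := ‖spatialPart e k‖
  -- `τ` is the time component making `τ • e - spatialPart e k` have Lorentzian length `s`.
  set τ := √(s ^ 2 + n ^ 2)
  have hτ_sq : τ ^ 2 = s ^ 2 + n ^ 2 := Real.sq_sqrt (by positivity)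
  have htime : ⟪e, k⟫ ≤ τ := by
    have hform : ⟪e, k⟫ ^ 2 - n ^ 2 < s ^ 2 := (Real.sqrt_lt' hspos).1 hs
    exact Real.le_sqrt_of_sq_le (by linarith)
  refine ⟨(τ / s) • e + (-1 / s) • spatialPart e k,
    mem_antisphere_lorentzAntinorm_one_iff.2 ⟨?_, ?_⟩, ?_⟩
  · rw [smul_add_smul_spatialPart_mem_futureCone_iff he, abs_div, abs_neg, abs_one,
      abs_of_pos hspos, div_mul_eq_mul_div, one_mul]
    gcongr
    exact Real.le_sqrt_of_sq_le (le_add_of_nonneg_left (sq_nonneg s))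
  · rw [lorentzForm_smul_add_smul_spatialPart he]
    field_simp
    linarith
  · calc ⟪k, (τ / s) • e + (-1 / s) • spatialPart e k⟫ = (⟪e, k⟫ * τ - n ^ 2) / s := by
          rw [inner_self_smul_add_smul_spatialPart he]
          ring
      _ ≤ (τ * τ - n ^ 2) / s := by gcongr
      _ = s := by
          rw [← sq, hτ_sq, add_sub_cancel_right, sq, mul_self_div_self]

theorem dualFn_lorentzAntinorm_innerSL (he : ‖e‖ = 1) {h : E} (hh : -h ∈ futureCone e) :
    dualFn (lorentzAntinorm e) (innerSL ℝ h) = ((√(lorentzForm e h) : ℝ) : EReal) := by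
  rw [dualFn, neg_eq_iff_eq_neg, ← EReal.coe_neg, ← lorentzForm_neg]
  refine IsLUB.sSup_eq ⟨?_, fun b hb => EReal.ge_of_forall_gt_iff_ge.1 fun z hz => ?_⟩
  · rintro _ ⟨v, hv, rfl⟩
    have hle := sqrt_lorentzForm_le_inner_of_mem_antisphere he hh hv
    rw [inner_neg_left] at hle
    exact EReal.coe_le_coe_iff.2 (le_neg_of_le_neg hle)
  · obtain ⟨v, hv, hle⟩ :=
      exists_mem_antisphere_inner_le he (lt_neg_of_lt_neg (EReal.coe_lt_coe_iff.1 hz))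
    rw [inner_neg_left, neg_le_neg_iff] at hle
    exact (EReal.coe_le_coe_iff.2 hle).trans (hb ⟨v, hv, rfl⟩)

theorem statement16_general (he : ‖e‖ = 1) :
    {h : E | innerSL ℝ h ∈ negDual (futureCone e)}
      = {h | ⟪e, h⟫ ≤ 0 ∧ ‖spatialPart e h‖ ^ 2 ≤ ⟪e, h⟫ ^ 2} ∧
    ∀ h : E, ⟪e, h⟫ ≤ 0 → ‖spatialPart e h‖ ^ 2 ≤ ⟪e, h⟫ ^ 2 →
      dualFn (lorentzAntinorm e) (innerSL ℝ h) = ((√(lorentzForm e h) : ℝ) : EReal) :=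
  ⟨Set.ext fun _ => (innerSL_mem_negDual_futureCone_iff he).trans neg_mem_futureCone_iff,
    fun _ hnonpos hsq =>
      dualFn_lorentzAntinorm_innerSL he (neg_mem_futureCone_iff.2 ⟨hnonpos, hsq⟩)⟩

end Lorentz

section EuclideanSpace

open scoped RealInnerProductSpace

variable {ι : Type*} [Fintype ι]

theorem innerSL_apply_eq_sum (h u : EuclideanSpace ℝ ι) :
    innerSL ℝ h u = ∑ i, h i * u i := by
  simp [PiLp.inner_apply, mul_comm]

variable [DecidableEq ι]

theorem real_inner_single_one_left (j : ι) (u : EuclideanSpace ℝ ι) :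
    ⟪EuclideanSpace.single j 1, u⟫ = u j := by
  rw [EuclideanSpace.inner_single_left, map_one, one_mul]

theorem norm_spatialPart_single_sq (j : ι) (u : EuclideanSpace ℝ ι) :
    ‖spatialPart (EuclideanSpace.single j 1) u‖ ^ 2
      = ∑ i ∈ Finset.univ.filter (fun i => i ≠ j), u i ^ 2 := by
  rw [EuclideanSpace.real_norm_sq_eq, Finset.sum_filter]
  refine Finset.sum_congr rfl fun i _ => ?_
  by_cases hij : i = j <;> simp [spatialPart, real_inner_single_one_left, hij]

theorem norm_spatialPart_single (j : ι) (u : EuclideanSpace ℝ ι) :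
    ‖spatialPart (EuclideanSpace.single j 1) u‖
      = √(∑ i ∈ Finset.univ.filter (fun i => i ≠ j), u i ^ 2) := by
  rw [← norm_spatialPart_single_sq, Real.sqrt_sq (norm_nonneg _)]

theorem lorentzForm_single (j : ι) (u : EuclideanSpace ℝ ι) :
    lorentzForm (EuclideanSpace.single j 1) u
      = u j ^ 2 - ∑ i ∈ Finset.univ.filter (fun i => i ≠ j), u i ^ 2 := by
  rw [lorentzForm, real_inner_single_one_left, norm_spatialPart_single_sq]

theorem futureCone_single_zero (r : ℕ) :
    futureCone (EuclideanSpace.single (0 : Fin (r + 1)) (1 : ℝ)) = lightCone r := by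
  ext u
  rw [futureCone, mem_ofPred_eq, norm_spatialPart_single, real_inner_single_one_left]
  rfl

theorem lorentzAntinorm_single_zero (r : ℕ) :
    lorentzAntinorm (EuclideanSpace.single (0 : Fin (r + 1)) (1 : ℝ)) = lightAntinorm r := by
  ext u
  simp only [lorentzAntinorm, lightAntinorm, futureCone_single_zero, lorentzForm_single, lightCone,
    mem_ofPred_eq]

end EuclideanSpace

/-- identifying `(ℝ^{r+1})*` with `ℝ^{r+1}` via the standard pairing
`⟨h, u⟩ = ∑ i, hᵢ uᵢ`, the negative dual cone of the forward light cone is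
`{h : h₀ ≤ 0, h₀² ≥ h₁² + ⋯ + h_r²}`, and on it the dual function of
`α(u) = √(u₀² - u₁² - ⋯ - u_r²)` is `α^∨(h) = √(h₀² - h₁² - ⋯ - h_r²)`. -/
theorem statement16 (r : ℕ) (hr : 1 ≤ r) :
    {h : EuclideanSpace ℝ (Fin (r + 1)) | ∀ u ∈ lightCone r, ∑ i, h i * u i ≤ 0}
      = {h | h 0 ≤ 0 ∧ ∑ i ∈ Finset.univ.filter (fun i => i ≠ 0), (h i) ^ 2 ≤ (h 0) ^ 2} ∧
    ∀ h : EuclideanSpace ℝ (Fin (r + 1)), h 0 ≤ 0 →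
      ∑ i ∈ Finset.univ.filter (fun i => i ≠ 0), (h i) ^ 2 ≤ (h 0) ^ 2 →
      - sSup ((fun v => ((∑ i, h i * v i : ℝ) : EReal)) '' {v | lightAntinorm r v = 1})
        = ((Real.sqrt ((h 0) ^ 2 - ∑ i ∈ Finset.univ.filter (fun i => i ≠ 0), (h i) ^ 2) : ℝ)
            : EReal) := by
  simpa only [negDual, dualFn, antisphere, mem_ofPred_eq, futureCone_single_zero,
    lorentzAntinorm_single_zero, innerSL_apply_eq_sum, norm_spatialPart_single_sq,
    real_inner_single_one_left, lorentzForm_single, EReal.coe_one] using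
    statement16_general (e := EuclideanSpace.single (0 : Fin (r + 1)) (1 : ℝ)) (by simp)
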